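/- For every x ∈ ℝ^d the set {ω ∈ Ω_t : x ∉ Λ_t(ω)} is analytic. Consequently, for every open set O ⊂ ℝ^d the set {ω ∈ Ω_t : Λ_t(ω) ∩ O ≠ ∅} is co-analytic (hence universally measurable), and the random set Λ_t is ℱ_t-measurable, i.e. {ω ∈ Ω_t : Λ_t(ω) ∩ C ≠ ∅} ∈ ℱ_t for every closed set C ⊂ ℝ^d. -/

import Mathlib

/-!
The set `{ω : x ∉ Λ_t(ω)}` is the projection of those `(ω, P)` in the graph of `𝒫_t` for which
`P {ω' : x ∉ K(ω, ω')} > 0`. Writing the graph as a continuous image of the Baire space `ℕ → ℕ`,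
the latter condition pulls back to a Borel condition, because `(ω, P) ↦ P {ω' : x ∉ K(ω, ω')}` is
measurable along the parametrization (`measurable_coe_of_continuous`). So the set is the continuous
image of a Borel set, hence analytic (`analyticSet_exists_measure_section_ne_zero`).

As `Λ_t(ω)` is stable under adding nonnegative vectors, it meets an open set `O` if and only if it
contains a point of a countable dense subset of `O` (`exists_mem_dense_inter`), so that
`{Λ_t ∩ O = ∅}` is a countable intersection of analytic sets. Universal measurability comes from
the classical theorem that analytic sets are measurable for every finite measure; it is proved here
by approximating an analytic set from within by continuous images of compact subsets of the Baire
space (`exists_isCompact_subset_range`).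

Finally `Λ_t(ω)` is closed, since countable unions of polar sets are polar. A closed set `C` is the
union of the compact sets `C ∩ closedBall 0 n`, and a closed set meets a compact set if and only if
it meets all its open `1/(m+1)`-neighbourhoods; this reduces closed sets to open ones by countable
operations.
-/

open MeasureTheory
open scoped NNReal

noncomputable section

/-- A set is universally measurable if it is null-measurable for every Borel
probability measure, i.e. belongs to every completion of the Borel σ-field. -/
def UMSet {α : Type*} [MeasurableSpace α] (s : Set α) : Prop :=
  ∀ μ : Measure α, IsProbabilityMeasure μ → NullMeasurableSet s μ

/-- Convexity of a set of probability measures. -/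
def ConvexPM {α : Type*} [MeasurableSpace α] (S : Set (ProbabilityMeasure α)) : Prop :=
  ∀ P ∈ S, ∀ Q ∈ S, ∀ a : ℝ≥0, a ≤ 1 →
    ∃ R ∈ S, (R : Measure α) = a • (P : Measure α) + (1 - a) • (Q : Measure α)

/-- A set `N` is `𝒬`-polar if it is contained in a Borel set which is `P`-null
for every `P ∈ 𝒬`. -/
def QPolar {α : Type*} [MeasurableSpace α]
    (𝒬 : Set (ProbabilityMeasure α)) (N : Set α) : Prop :=
  ∃ B : Set α, MeasurableSet B ∧ N ⊆ B ∧ ∀ P ∈ 𝒬, (P : Measure α) B = 0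

/-- `Λ_t(ω) = {x ∈ ℝ^d : x ∈ K_{t+1}(ω,·) 𝒫_t(ω)-q.s.}`. -/
def LambdaT {d t : ℕ} {Ω₁ : Type} [MeasurableSpace Ω₁]
    (𝒫t : (Fin t → Ω₁) → Set (ProbabilityMeasure Ω₁))
    (K : ((Fin t → Ω₁) × Ω₁) → Set (Fin d → ℝ)) (ω : Fin t → Ω₁) :
    Set (Fin d → ℝ) :=
  {x | QPolar (𝒫t ω) {ω' | x ∉ K (ω, ω')}}

open Set Filter Topology

/-! ### Universal measurability of analytic sets -/

/-- The cylinder of sequences whose first `k` terms are bounded by those of `n`. -/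
def boundedCylinder (n : ℕ → ℕ) (k : ℕ) : Set (ℕ → ℕ) := {x | ∀ i < k, x i ≤ n i}

/-- An open neighbourhood of the compact set `{x | x ≤ n}` in the Baire space contains one of the
(noncompact) cylinders decreasing to it. -/
lemma exists_boundedCylinder_subset (n : ℕ → ℕ) {V : Set (ℕ → ℕ)} (hV : IsOpen V)
    (hnV : {x | ∀ i, x i ≤ n i} ⊆ V) : ∃ k, boundedCylinder n k ⊆ V := by
  by_contra! h
  have h' : ∀ k, ∃ x ∈ boundedCylinder n k, x ∉ V := fun k => not_subset.1 (h k)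
  choose x hx hxV using h'
  have hcomp : IsCompact {x : ℕ → ℕ | ∀ i, x i ≤ n i} := by
    have : {x : ℕ → ℕ | ∀ i, x i ≤ n i} = univ.pi fun i => Iic (n i) := by
      ext x; simp only [mem_univ_pi, mem_ofPred_eq, mem_Iic]
    rw [this]
    exact isCompact_univ_pi fun i => (finite_Iic (n i)).isCompact
  obtain ⟨a, ha, φ, hφ, hlim⟩ := hcomp.tendsto_subseq (x := fun k i => min (x k i) (n i))
    (fun k i => min_le_right _ _)
  -- `x k` and its truncation agree on the first `k` coordinates, so they have the same limit.
  have hlim' : Tendsto (x ∘ φ) atTop (𝓝 a) := by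
    rw [tendsto_pi_nhds] at hlim ⊢
    intro i
    refine (hlim i).congr' ?_
    filter_upwards [eventually_gt_atTop i] with j hj
    exact min_eq_left (hx (φ j) i (hj.trans_le (hφ.id_le j)))
  obtain ⟨j, hj⟩ := (hlim'.eventually (hV.mem_nhds (hnV ha))).exists
  exact hxV _ hj

/-- Choosing bounds one coordinate at a time, by continuity from below of the outer measure, the
image of every cylinder of a suitable sequence keeps outer measure above a level `c`. -/
lemma exists_forall_lt_measure_image_boundedCylinder {X : Type*} [MeasurableSpace X]
    (μ : Measure X) (f : (ℕ → ℕ) → X) {c : ENNReal} (hc : c < μ (range f)) :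
    ∃ n : ℕ → ℕ, ∀ k, c < μ (f '' boundedCylinder n k) := by
  have step : ∀ (k : ℕ) (S : Set (ℕ → ℕ)), ∃ m : ℕ, c < μ (f '' S) →
      c < μ (f '' (S ∩ {x | x k ≤ m})) := by
    intro k S
    by_cases hS : c < μ (f '' S)
    · have hU : f '' S = ⋃ m : ℕ, f '' (S ∩ {x | x k ≤ m}) := by
        have hcov : (⋃ m : ℕ, {x : ℕ → ℕ | x k ≤ m}) = univ :=
          eq_univ_of_forall fun x => mem_iUnion.2 ⟨x k, le_refl (x k)⟩
        rw [← image_iUnion, ← inter_iUnion, hcov, inter_univ]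
      have hmono : Monotone fun m : ℕ => f '' (S ∩ {x | x k ≤ m}) := fun m m' hm =>
        image_mono (inter_subset_inter_right _ fun x (hx : x k ≤ m) => hx.trans hm)
      rw [hU, hmono.measure_iUnion, lt_iSup_iff] at hS
      obtain ⟨m, hm⟩ := hS
      exact ⟨m, fun _ => hm⟩
    · exact ⟨0, fun h => absurd h hS⟩
  choose g hg using step
  let S : ℕ → Set (ℕ → ℕ) := fun k => Nat.rec univ (fun k S => S ∩ {x | x k ≤ g k S}) k
  have hS : ∀ k, c < μ (f '' S k) := by
    intro k
    induction k with
    | zero => simpa [S] using hc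
    | succ k ih => exact hg k _ ih
  refine ⟨fun k => g k (S k), fun k => ?_⟩
  have hSk : S k = boundedCylinder (fun k => g k (S k)) k := by
    induction k with
    | zero => simp [S, boundedCylinder]
    | succ k ih =>
      change S k ∩ {x | x k ≤ g k (S k)} = _
      have ih' : ∀ x, x ∈ S k ↔ ∀ i < k, x i ≤ g i (S i) := fun x => Set.ext_iff.1 ih x
      ext x
      simp only [boundedCylinder, mem_inter_iff, mem_ofPred_eq, Nat.lt_succ_iff_lt_or_eq, ih']
      constructor
      · rintro ⟨h1, h2⟩ i (hi | rfl)
        exacts [h1 i hi, h2]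
      · exact fun h => ⟨fun i hi => h i (Or.inl hi), h k (Or.inr rfl)⟩
  rw [← hSk]
  exact hS k

/-- Inner regularity of finite measures on analytic sets. -/
lemma exists_isCompact_subset_range {X : Type*} [TopologicalSpace X] [MeasurableSpace X]
    (μ : Measure X) [μ.OuterRegular] {f : (ℕ → ℕ) → X} (hf : Continuous f)
    {c : ENNReal} (hc : c < μ (range f)) :
    ∃ L ⊆ range f, IsCompact L ∧ c ≤ μ L := by
  obtain ⟨n, hn⟩ := exists_forall_lt_measure_image_boundedCylinder μ f hc
  refine ⟨f '' {x | ∀ i, x i ≤ n i}, image_subset_range _ _, ?_, ?_⟩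
  · have : {x : ℕ → ℕ | ∀ i, x i ≤ n i} = univ.pi fun i => Iic (n i) := by
      ext x; simp only [mem_univ_pi, mem_ofPred_eq, mem_Iic]
    rw [this]
    exact (isCompact_univ_pi fun i => (finite_Iic (n i)).isCompact).image hf
  · rw [Set.measure_eq_iInf_isOpen _ μ]
    refine le_iInf fun U => le_iInf fun hU => le_iInf fun hUo => ?_
    obtain ⟨k, hk⟩ := exists_boundedCylinder_subset n (hUo.preimage hf) (image_subset_iff.1 hU)
    exact (hn k).le.trans (measure_mono (image_subset_iff.2 hk))

/-- Analytic subsets of a Polish space are universally measurable. -/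
lemma MeasureTheory.AnalyticSet.umSet {X : Type*} [TopologicalSpace X] [PolishSpace X]
    [MeasurableSpace X] [BorelSpace X] {s : Set X} (hs : AnalyticSet s) : UMSet s := by
  intro μ _
  rw [AnalyticSet] at hs
  obtain rfl | ⟨f, hf, rfl⟩ := hs
  · exact MeasurableSet.empty.nullMeasurableSet
  obtain h0 | hpos := eq_zero_or_pos (μ (range f))
  · exact NullMeasurableSet.of_null h0
  obtain ⟨u, -, hu, hlim⟩ := exists_seq_strictMono_tendsto' hpos
  choose L hLs hLc hLu using fun j => exists_isCompact_subset_range μ hf (hu j).2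
  have hsub : (⋃ j, L j) ⊆ range f := iUnion_subset hLs
  have hmeas : NullMeasurableSet (⋃ j, L j) μ :=
    (MeasurableSet.iUnion fun j => (hLc j).measurableSet).nullMeasurableSet
  refine hmeas.congr (ae_eq_of_subset_of_measure_ge hsub ?_ hmeas (measure_ne_top _ _))
  exact le_of_tendsto' hlim fun j => (hLu j).trans (measure_mono (subset_iUnion L j))

lemma UMSet.compl {α : Type*} [MeasurableSpace α] {s : Set α} (hs : UMSet s) : UMSet sᶜ :=
  fun μ hμ => (hs μ hμ).compl

lemma UMSet.iUnion {α : Type*} [MeasurableSpace α] {s : ℕ → Set α} (hs : ∀ n, UMSet (s n)) :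
    UMSet (⋃ n, s n) :=
  fun μ hμ => NullMeasurableSet.iUnion fun n => hs n μ hμ

lemma UMSet.iInter {α : Type*} [MeasurableSpace α] {s : ℕ → Set α} (hs : ∀ n, UMSet (s n)) :
    UMSet (⋂ n, s n) :=
  fun μ hμ => NullMeasurableSet.iInter fun n => hs n μ hμ

/-! ### Projections of analytic sets of measures -/

/-- A weakly continuous family of probability measures is a measurable family of measures. -/
lemma measurable_coe_of_continuous {Z Ω : Type*} [TopologicalSpace Z] [MeasurableSpace Z]
    [OpensMeasurableSpace Z] [TopologicalSpace Ω] [PolishSpace Ω] [MeasurableSpace Ω]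
    [BorelSpace Ω] {P : Z → ProbabilityMeasure Ω} (hP : Continuous P) :
    Measurable fun z => (P z : Measure Ω) := by
  refine Measurable.measure_of_isPiSystem_of_isProbabilityMeasure
    (BorelSpace.measurable_eq (α := Ω)) isPiSystem_isOpen fun G hG => ?_
  -- By the portmanteau theorem, `z ↦ P z G` is lower semicontinuous for open `G`.
  refine LowerSemicontinuous.measurable (lowerSemicontinuous_iff_le_liminf.2 fun z => ?_)
  exact ProbabilityMeasure.le_liminf_measure_open_of_tendsto (hP.tendsto z) hG

/-- If `A` is a Borel set and the graph of `𝒬` is analytic, then the set of those `ω` whose section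
`A_ω` is charged by some measure in `𝒬 ω` is analytic. -/
lemma analyticSet_exists_measure_section_ne_zero {Z Ω : Type*}
    [TopologicalSpace Z] [PolishSpace Z] [MeasurableSpace Z] [BorelSpace Z]
    [TopologicalSpace Ω] [PolishSpace Ω] [MeasurableSpace Ω] [BorelSpace Ω]
    {𝒬 : Z → Set (ProbabilityMeasure Ω)}
    (h𝒬 : AnalyticSet {p : Z × ProbabilityMeasure Ω | p.2 ∈ 𝒬 p.1})
    {A : Set (Z × Ω)} (hA : MeasurableSet A) :
    AnalyticSet {ω | ∃ P ∈ 𝒬 ω, (P : Measure Ω) (Prod.mk ω ⁻¹' A) ≠ 0} := by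
  rw [AnalyticSet] at h𝒬
  obtain h0 | ⟨f, hf, hrange⟩ := h𝒬
  · convert analyticSet_empty (α := Z) using 1
    refine eq_empty_of_forall_notMem fun ω ⟨P, hP, _⟩ => ?_
    exact (h0 ▸ (show (ω, P) ∈ {p : Z × ProbabilityMeasure Ω | p.2 ∈ 𝒬 p.1} from hP) : _ ∈ ∅)
  · have hf1 : Continuous fun n => (f n).1 := continuous_fst.comp hf
    have hf2 : Continuous fun n => (f n).2 := continuous_snd.comp hf
    let κ : ProbabilityTheory.Kernel (ℕ → ℕ) Ω :=
      ⟨fun n => ((f n).2 : Measure Ω), measurable_coe_of_continuous hf2⟩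
    have : ProbabilityTheory.IsMarkovKernel κ :=
      ⟨fun n => inferInstanceAs (IsProbabilityMeasure ((f n).2 : Measure Ω))⟩
    have hA' : MeasurableSet {q : (ℕ → ℕ) × Ω | ((f q.1).1, q.2) ∈ A} :=
      ((hf1.measurable.comp measurable_fst).prodMk measurable_snd) hA
    have hmeas : Measurable fun n => ((f n).2 : Measure Ω) (Prod.mk (f n).1 ⁻¹' A) :=
      ProbabilityTheory.Kernel.measurable_kernel_prodMk_left (κ := κ) hA'
    have hB : MeasurableSet {n | ((f n).2 : Measure Ω) (Prod.mk (f n).1 ⁻¹' A) ≠ 0} :=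
      hmeas (measurableSet_singleton 0).compl
    convert hB.analyticSet_image hf1.measurable using 1
    ext ω
    constructor
    · rintro ⟨P, hP, hne⟩
      obtain ⟨n, hn⟩ : (ω, P) ∈ range f := hrange ▸ hP
      refine ⟨n, ?_, by simp [hn]⟩
      simpa [hn] using hne
    · rintro ⟨n, hn, rfl⟩
      exact ⟨(f n).2, (hrange ▸ mem_range_self n : f n ∈ {p : Z × _ | p.2 ∈ 𝒬 p.1}), hn⟩

/-! ### Geometry of the random set -/

lemma QPolar.mono {α : Type*} [MeasurableSpace α] {𝒬 : Set (ProbabilityMeasure α)} {M N : Set α}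
    (hN : QPolar 𝒬 N) (h : M ⊆ N) : QPolar 𝒬 M := by
  obtain ⟨B, hB, hNB, h0⟩ := hN
  exact ⟨B, hB, h.trans hNB, h0⟩

lemma QPolar.iUnion {α : Type*} [MeasurableSpace α] {𝒬 : Set (ProbabilityMeasure α)}
    {N : ℕ → Set α} (hN : ∀ n, QPolar 𝒬 (N n)) : QPolar 𝒬 (⋃ n, N n) := by
  choose B hB hNB h0 using hN
  exact ⟨⋃ n, B n, MeasurableSet.iUnion hB, iUnion_mono hNB,
    fun P hP => measure_iUnion_null fun n => h0 n P hP⟩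

lemma not_qPolar_iff {α : Type*} [MeasurableSpace α] {𝒬 : Set (ProbabilityMeasure α)} {N : Set α}
    (hN : MeasurableSet N) : ¬ QPolar 𝒬 N ↔ ∃ P ∈ 𝒬, (P : Measure α) N ≠ 0 := by
  constructor
  · intro h
    by_contra! h'
    exact h ⟨N, hN, Subset.rfl, h'⟩
  · rintro ⟨P, hP, hne⟩ ⟨B, -, hNB, h0⟩
    exact hne (measure_mono_null hNB (h0 P hP))

lemma isClosed_lambdaT {d t : ℕ} {Ω₁ : Type} [MeasurableSpace Ω₁]
    (𝒫t : (Fin t → Ω₁) → Set (ProbabilityMeasure Ω₁))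
    (K : ((Fin t → Ω₁) × Ω₁) → Set (Fin d → ℝ)) (hK : ∀ q, IsClosed (K q)) (ω : Fin t → Ω₁) :
    IsClosed (LambdaT 𝒫t K ω) := by
  refine IsSeqClosed.isClosed fun x a hx hlim => ?_
  refine (QPolar.iUnion hx).mono fun ω' hω' => ?_
  by_contra h
  simp only [mem_iUnion, mem_ofPred_eq, not_exists, not_not] at h
  exact hω' ((hK _).mem_of_tendsto hlim (Eventually.of_forall h))

/-- A convex cone containing the nonnegative orthant is stable under passing to larger vectors. -/
lemma cone_mem_of_le {d : ℕ} {S : Set (Fin d → ℝ)} (hconv : Convex ℝ S)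
    (hcone : ∀ x ∈ S, ∀ a : ℝ, 0 ≤ a → a • x ∈ S)
    (horth : {x : Fin d → ℝ | ∀ i, 0 ≤ x i} ⊆ S) {x y : Fin d → ℝ} (hx : x ∈ S) (hxy : x ≤ y) :
    y ∈ S := by
  have hyx : y - x ∈ S := horth fun i => sub_nonneg.2 (hxy i)
  have hmid : (1 / 2 : ℝ) • x + (1 / 2 : ℝ) • (y - x) ∈ S :=
    hconv hx hyx (by norm_num) (by norm_num) (by norm_num)
  have := hcone _ hmid 2 (by norm_num)
  rwa [← smul_add, smul_smul, show (2 : ℝ) * (1 / 2) = 1 by norm_num, one_smul,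
    add_sub_cancel] at this

/-- An upper set of `ℝ^d` meeting an open set `O` contains a point of `D ∩ O`, for every dense
`D`. -/
lemma exists_mem_dense_inter {d : ℕ} {S O D : Set (Fin d → ℝ)} (hS : IsUpperSet S)
    (hO : IsOpen O) (hD : Dense D) (h : (S ∩ O).Nonempty) : ∃ y ∈ D, y ∈ S ∩ O := by
  obtain ⟨x, hxS, hxO⟩ := h
  -- `x` is a limit of the points `x + ε (1, …, 1)`, which lie in the open set `{y | x < y}`.
  let U : Set (Fin d → ℝ) := univ.pi fun i => Ioi (x i)
  have hU : IsOpen U := isOpen_set_pi finite_univ fun i _ => isOpen_Ioi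
  have hlim : Tendsto (fun ε : ℝ => x + fun _ => ε) (𝓝[>] 0) (𝓝 x) := by
    have hc : Continuous fun ε : ℝ => x + fun _ : Fin d => ε := by fun_prop
    have := hc.tendsto 0
    rw [show (x + fun _ : Fin d => (0 : ℝ)) = x from add_zero x] at this
    exact this.mono_left nhdsWithin_le_nhds
  obtain ⟨ε, hεO, hε⟩ :=
    ((hlim.eventually (hO.mem_nhds hxO)).and self_mem_nhdsWithin).exists
  have hne : (O ∩ U).Nonempty :=
    ⟨_, hεO, fun i _ => lt_add_of_pos_right (x i) (show (0 : ℝ) < ε from hε)⟩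
  obtain ⟨y, ⟨hyO, hyU⟩, hyD⟩ := hD.inter_open_nonempty _ (hO.inter hU) hne
  exact ⟨y, hyD, hS (fun i => (hyU i trivial).le) hxS, hyO⟩

/-- For a closed-valued map into a proper metric space, universal measurability of the sets where
it hits a given open set passes to closed sets: these are exhausted by compact sets, and hitting a
compact set means hitting all its thickenings. -/
lemma umSet_inter_isClosed_nonempty {α E : Type*} [MeasurableSpace α] [PseudoMetricSpace E]
    [ProperSpace E] [Nonempty E] {F : α → Set E} (hF : ∀ ω, IsClosed (F ω))
    (hopen : ∀ O : Set E, IsOpen O → UMSet {ω | (F ω ∩ O).Nonempty}) {C : Set E}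
    (hC : IsClosed C) : UMSet {ω | (F ω ∩ C).Nonempty} := by
  obtain ⟨e⟩ := ‹Nonempty E›
  let T : ℕ → Set E := fun n => C ∩ Metric.closedBall e n
  have hT : ∀ n, IsCompact (T n) := fun n => (isCompact_closedBall e n).inter_left hC
  have heq : {ω | (F ω ∩ C).Nonempty} = ⋃ n : ℕ, ⋂ m : ℕ,
      {ω | (F ω ∩ Metric.thickening (1 / ((m : ℝ) + 1)) (T n)).Nonempty} := by
    ext ω
    simp only [mem_ofPred_eq, mem_iUnion, mem_iInter]
    constructor
    · rintro ⟨x, hxF, hxC⟩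
      obtain ⟨n, hn⟩ := exists_nat_ge (dist x e)
      exact ⟨n, fun m => ⟨x, hxF, Metric.self_subset_thickening Nat.one_div_pos_of_nat _
        ⟨hxC, hn⟩⟩⟩
    · rintro ⟨n, hn⟩
      by_contra hempty
      have hsub : T n ⊆ (F ω)ᶜ := fun x hx hxF => hempty ⟨x, hxF, hx.1⟩
      obtain ⟨δ, hδ, hδsub⟩ := (hT n).exists_thickening_subset_open (hF ω).isOpen_compl hsub
      obtain ⟨m, hm⟩ := exists_nat_one_div_lt hδ
      obtain ⟨x, hxF, hx⟩ := hn m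
      exact hδsub (Metric.thickening_mono hm.le _ hx) hxF
  rw [heq]
  exact UMSet.iUnion fun n => UMSet.iInter fun m => hopen _ Metric.isOpen_thickening

/-- `{ω : x ∉ Λ_t(ω)}` is analytic for every `x`; consequently
`{Λ_t ∩ O ≠ ∅}` is co-analytic (hence universally measurable) for open `O`, and
`Λ_t` is `ℱ_t`-measurable: `{Λ_t ∩ C ≠ ∅}` is universally measurable for every
closed `C`. -/
theorem lambda_measurable (d t : ℕ) (hd : 1 ≤ d)
    (Ω₁ : Type) [TopologicalSpace Ω₁] [PolishSpace Ω₁] [MeasurableSpace Ω₁]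
    [BorelSpace Ω₁] [Nonempty Ω₁]
    (𝒫t : (Fin t → Ω₁) → Set (ProbabilityMeasure Ω₁))
    (h𝒫ne : ∀ ω, (𝒫t ω).Nonempty)
    (h𝒫conv : ∀ ω, ConvexPM (𝒫t ω))
    (h𝒫graph : AnalyticSet
      {p : (Fin t → Ω₁) × ProbabilityMeasure Ω₁ | p.2 ∈ 𝒫t p.1})
    (K : ((Fin t → Ω₁) × Ω₁) → Set (Fin d → ℝ))
    (hKmeas : ∀ C : Set (Fin d → ℝ), IsClosed C →
      MeasurableSet {q : (Fin t → Ω₁) × Ω₁ | (K q ∩ C).Nonempty})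
    (hKclosed : ∀ q, IsClosed (K q))
    (hKconv : ∀ q, Convex ℝ (K q))
    (hKcone : ∀ q, ∀ x ∈ K q, ∀ a : ℝ, 0 ≤ a → a • x ∈ K q)
    (hKorth : ∀ q, {x : Fin d → ℝ | ∀ i, 0 ≤ x i} ⊆ K q) :
    (∀ x : Fin d → ℝ, AnalyticSet {ω : Fin t → Ω₁ | x ∉ LambdaT 𝒫t K ω}) ∧
    (∀ O : Set (Fin d → ℝ), IsOpen O →
      AnalyticSet {ω : Fin t → Ω₁ | (LambdaT 𝒫t K ω ∩ O).Nonempty}ᶜ ∧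
      UMSet {ω : Fin t → Ω₁ | (LambdaT 𝒫t K ω ∩ O).Nonempty}) ∧
    (∀ C : Set (Fin d → ℝ), IsClosed C →
      UMSet {ω : Fin t → Ω₁ | (LambdaT 𝒫t K ω ∩ C).Nonempty}) := by
  have hopen1 : ∀ x : Fin d → ℝ, AnalyticSet {ω : Fin t → Ω₁ | x ∉ LambdaT 𝒫t K ω} := by
    intro x
    have hA : MeasurableSet {q : (Fin t → Ω₁) × Ω₁ | x ∉ K q} := by
      have := (hKmeas {x} isClosed_singleton).compl
      simp only [inter_singleton_nonempty] at this
      exact this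
    convert analyticSet_exists_measure_section_ne_zero h𝒫graph hA using 1
    ext ω
    exact not_qPolar_iff (measurable_prodMk_left (x := ω) hA)
  have hup : ∀ ω, IsUpperSet (LambdaT 𝒫t K ω) := fun ω x y hxy hx =>
    QPolar.mono hx fun ω' hy hx' =>
      hy (cone_mem_of_le (hKconv _) (hKcone _) (hKorth _) hx' hxy)
  have hopen2 : ∀ O : Set (Fin d → ℝ), IsOpen O →
      AnalyticSet {ω : Fin t → Ω₁ | (LambdaT 𝒫t K ω ∩ O).Nonempty}ᶜ := by
    intro O hO
    obtain ⟨D, hDc, hD⟩ := TopologicalSpace.exists_countable_dense (Fin d → ℝ)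
    obtain rfl | hOne := O.eq_empty_or_nonempty
    · simpa using MeasurableSet.univ.analyticSet
    have heq : {ω : Fin t → Ω₁ | (LambdaT 𝒫t K ω ∩ O).Nonempty}ᶜ =
        ⋂ y : ↥(O ∩ D), {ω : Fin t → Ω₁ | (y : Fin d → ℝ) ∉ LambdaT 𝒫t K ω} := by
      ext ω
      simp only [mem_compl_iff, mem_ofPred_eq, mem_iInter]
      constructor
      · exact fun h y hy => h ⟨y, hy, y.2.1⟩
      · intro h hne
        obtain ⟨y, hyD, hyS, hyO⟩ := exists_mem_dense_inter (hup ω) hO hD hne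
        exact h ⟨y, hyO, hyD⟩ hyS
    have : Nonempty ↥(O ∩ D) := (hD.inter_open_nonempty O hO hOne).to_subtype
    have : Countable ↥(O ∩ D) := (hDc.mono inter_subset_right).to_subtype
    rw [heq]
    exact AnalyticSet.iInter fun y => hopen1 y
  have hopen3 : ∀ O : Set (Fin d → ℝ), IsOpen O →
      UMSet {ω : Fin t → Ω₁ | (LambdaT 𝒫t K ω ∩ O).Nonempty} := fun O hO => by
    simpa only [compl_compl] using (hopen2 O hO).umSet.compl
  exact ⟨hopen1, fun O hO => ⟨hopen2 O hO, hopen3 O hO⟩, fun C hC =>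
    umSet_inter_isClosed_nonempty (isClosed_lambdaT 𝒫t K hKclosed) hopen3 hC⟩

end
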